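/- For 2 ≤ k < n, the closure of Σ_k in Herm(n) with respect to the Frobenius-norm topology equals the set {H ∈ Herm(n) : λ_1(H) = … = λ_k(H)} of all Hermitian matrices whose lowest k eigenvalues coincide; equivalently, cl(Σ_k) is the disjoint union Σ_k ∪ Σ_{k+1} ∪ … ∪ Σ_n (where Σ_n is the set of real scalar matrices). -/

import Mathlib

open Matrix

noncomputable section

/-- Sorted eigenvalues (increasing, counted with multiplicity) of a Hermitian matrix
(junk value for non-Hermitian matrices). -/
def eigs {n : ℕ} (H : Matrix (Fin n) (Fin n) ℂ) : Fin n → ℝ :=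
  if hH : H.IsHermitian then hH.eigenvalues ∘ Tuple.sort hH.eigenvalues else fun _ => 0

/-- The set Σ_j of j-fold ground-state degenerate Hermitian matrices:
λ₁ = … = λ_j < λ_{j+1} (for j = n the gap condition is vacuous, so Σ_n is the set of
Hermitian matrices with all eigenvalues equal, i.e. the real scalar matrices). -/
def SigmaSet (n k : ℕ) : Set (Matrix (Fin n) (Fin n) ℂ) :=
  {H | H.IsHermitian ∧ (∀ i j : Fin n, (i : ℕ) < k → (j : ℕ) < k → eigs H i = eigs H j) ∧
    ∀ i j : Fin n, (i : ℕ) < k → (j : ℕ) = k → eigs H i < eigs H j}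

/-!
Conjugating a closed set of real diagonal matrices by the compact unitary group yields a closed set,
so a closed condition on the sorted spectrum cuts out a closed set of Hermitian matrices. In
particular, coincidence of the lowest `k` eigenvalues survives limits. Conversely, raising every
eigenvalue except the lowest `k` by a small `t > 0`, with the eigenvectors fixed, opens a gap, so
every matrix whose lowest `k` eigenvalues coincide is a limit of matrices in Σ_k.
-/

lemma eq_of_monotone_of_map_univ_eq {α : Type*} [PartialOrder α] {n : ℕ} {f g : Fin n → α}
    (hf : Monotone f) (hg : Monotone g)
    (h : Finset.univ.val.map f = Finset.univ.val.map g) : f = g := by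
  rw [Fin.univ_val_map, Fin.univ_val_map, Multiset.coe_eq_coe] at h
  exact List.ofFn_injective (h.eq_of_sortedLE hf.sortedLE_ofFn hg.sortedLE_ofFn)

lemma permMatrix_mem_unitaryGroup {m R : Type*} [Fintype m] [DecidableEq m] [CommRing R]
    [StarRing R] (σ : Equiv.Perm m) : σ.permMatrix R ∈ unitaryGroup m R := by
  rw [mem_unitaryGroup_iff, star_eq_conjTranspose, conjTranspose_permMatrix, ← permMatrix_mul,
    inv_mul_cancel, permMatrix_one]

lemma isClosedEmbedding_diagonal_ofReal {m 𝕜 : Type*} [DecidableEq m] [RCLike 𝕜] :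
    Topology.IsClosedEmbedding fun d : m → ℝ ↦ (diagonal (RCLike.ofReal ∘ d) : Matrix m m 𝕜) := by
  have hinv : Function.LeftInverse (fun (A : Matrix m m 𝕜) i ↦ RCLike.re (A i i))
      fun d : m → ℝ ↦ diagonal (RCLike.ofReal ∘ d) := fun d ↦ by ext i; simp
  exact hinv.isClosedEmbedding (by fun_prop) (by fun_prop)

section UnitaryDiagonal

variable {m 𝕜 : Type*} [Fintype m] [DecidableEq m] [RCLike 𝕜]

instance compactSpace_unitaryGroup : CompactSpace (unitaryGroup m 𝕜) := by
  have hclosed : IsClosed (unitaryGroup m 𝕜 : Set (Matrix m m 𝕜)) := isClosed_unitary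
  have hbox : IsCompact (Set.univ.pi fun _ : m ↦ Set.univ.pi fun _ : m ↦
      Metric.closedBall (0 : 𝕜) 1) :=
    isCompact_univ_pi fun _ ↦ isCompact_univ_pi fun _ ↦ isCompact_closedBall _ _
  exact isCompact_iff_compactSpace.mp <| hbox.of_isClosed_subset hclosed fun U hU i _ j _ ↦
    mem_closedBall_zero_iff.mpr (entry_norm_bound_of_unitary hU i j)

/-- The Hermitian matrix with eigenvalues `d` whose eigenvectors are the columns of `U`, so that
the spectrum can be prescribed and varied while the eigenvectors stay fixed. -/
def unitaryDiagonal (U : unitaryGroup m 𝕜) (d : m → ℝ) : Matrix m m 𝕜 :=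
  Unitary.conjStarAlgAut 𝕜 _ U (diagonal (RCLike.ofReal ∘ d))

lemma isHermitian_unitaryDiagonal (U : unitaryGroup m 𝕜) (d : m → ℝ) :
    (unitaryDiagonal U d).IsHermitian := by
  have hd : IsSelfAdjoint (diagonal (RCLike.ofReal ∘ d) : Matrix m m 𝕜) :=
    isHermitian_diagonal_iff.mpr fun _ ↦ RCLike.conj_ofReal _
  exact hd.map (Unitary.conjStarAlgAut 𝕜 _ U)

lemma roots_charpoly_unitaryDiagonal (U : unitaryGroup m 𝕜) (d : m → ℝ) :
    (unitaryDiagonal U d).charpoly.roots = Finset.univ.val.map (RCLike.ofReal ∘ d) := by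
  rw [unitaryDiagonal, Unitary.conjStarAlgAut_apply, charpoly_mul_comm, ← mul_assoc,
    Unitary.coe_star_mul_self, one_mul, charpoly_diagonal]
  convert Polynomial.roots_multiset_prod_X_sub_C (Finset.univ.val.map (RCLike.ofReal ∘ d : m → 𝕜))
  rw [Multiset.map_map]
  rfl

lemma map_eigenvalues_unitaryDiagonal (U : unitaryGroup m 𝕜) (d : m → ℝ) :
    Finset.univ.val.map (isHermitian_unitaryDiagonal U d).eigenvalues =
      Finset.univ.val.map d := by
  have hroots := (isHermitian_unitaryDiagonal U d).roots_charpoly_eq_eigenvalues.symm.trans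
    (roots_charpoly_unitaryDiagonal U d)
  rw [← Multiset.map_map, ← Multiset.map_map] at hroots
  exact Multiset.map_injective RCLike.ofReal_injective hroots

lemma unitaryDiagonal_mul_permMatrix (U : unitaryGroup m 𝕜) (σ : Equiv.Perm m) (d : m → ℝ) :
    unitaryDiagonal (U * ⟨σ⁻¹.permMatrix 𝕜, permMatrix_mem_unitaryGroup σ⁻¹⟩) (d ∘ σ) =
      unitaryDiagonal U d := by
  rw [unitaryDiagonal, Unitary.conjStarAlgAut_mul_apply, unitaryDiagonal,
    Unitary.conjStarAlgAut_apply]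
  simp [star_eq_conjTranspose, PEquiv.toMatrix_toPEquiv_mul, PEquiv.mul_toMatrix_toPEquiv,
    Equiv.Perm.inv_def, Function.comp_assoc]

lemma exists_unitaryDiagonal_eigenvalues_comp_eq {A : Matrix m m 𝕜} (hA : A.IsHermitian)
    (σ : Equiv.Perm m) : ∃ U : unitaryGroup m 𝕜, unitaryDiagonal U (hA.eigenvalues ∘ σ) = A := by
  refine ⟨_, (unitaryDiagonal_mul_permMatrix hA.eigenvectorUnitary σ hA.eigenvalues).trans ?_⟩
  exact hA.spectral_theorem.symm

lemma continuous_unitaryDiagonal (U : unitaryGroup m 𝕜) : Continuous (unitaryDiagonal U) := by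
  unfold unitaryDiagonal
  simp only [Unitary.conjStarAlgAut_apply]
  fun_prop

lemma isClosed_image2_unitaryDiagonal {S : Set (m → ℝ)} (hS : IsClosed S) :
    IsClosed (Set.image2 (unitaryDiagonal (𝕜 := 𝕜)) Set.univ S) := by
  let diagonalize (p : unitaryGroup m 𝕜 × Matrix m m 𝕜) : Matrix m m 𝕜 :=
    (Unitary.conjStarAlgAut 𝕜 _ p.1).symm p.2
  have hcont : Continuous diagonalize := by
    simp only [diagonalize, Unitary.conjStarAlgAut_symm_apply]
    fun_prop
  have hclosed := isClosedMap_snd_of_compactSpace _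
    ((isClosedEmbedding_diagonal_ofReal.isClosedMap S hS).preimage hcont)
  convert hclosed using 1
  ext A
  constructor
  · rintro ⟨U, -, d, hd, rfl⟩
    exact ⟨(U, unitaryDiagonal U d), ⟨d, hd, (StarAlgEquiv.symm_apply_apply _ _).symm⟩, rfl⟩
  · rintro ⟨⟨U, A⟩, ⟨d, hd, hdiag⟩, rfl⟩
    exact ⟨U, trivial, d, hd, (congrArg _ hdiag).trans (StarAlgEquiv.apply_symm_apply _ _)⟩

end UnitaryDiagonal

section DegenerateSet

variable {n k : ℕ}

lemma eigs_monotone (H : Matrix (Fin n) (Fin n) ℂ) : Monotone (eigs H) := by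
  unfold eigs
  split_ifs with hH
  · exact Tuple.monotone_sort _
  · exact monotone_const

lemma eigs_of_isHermitian {H : Matrix (Fin n) (Fin n) ℂ} (hH : H.IsHermitian) :
    eigs H = hH.eigenvalues ∘ Tuple.sort hH.eigenvalues :=
  dif_pos hH

lemma exists_unitaryDiagonal_eigs_eq {H : Matrix (Fin n) (Fin n) ℂ} (hH : H.IsHermitian) :
    ∃ U : unitaryGroup (Fin n) ℂ, unitaryDiagonal U (eigs H) = H := by
  rw [eigs_of_isHermitian hH]
  exact exists_unitaryDiagonal_eigenvalues_comp_eq hH _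

lemma eigs_unitaryDiagonal (U : unitaryGroup (Fin n) ℂ) {d : Fin n → ℝ} (hd : Monotone d) :
    eigs (unitaryDiagonal U d) = d := by
  refine eq_of_monotone_of_map_univ_eq (eigs_monotone _) hd ?_
  rw [eigs_of_isHermitian (isHermitian_unitaryDiagonal U d), ← Multiset.map_map,
    Multiset.map_univ_val_equiv, map_eigenvalues_unitaryDiagonal]

lemma image2_unitaryDiagonal_monotone (S : Set (Fin n → ℝ)) :
    Set.image2 (unitaryDiagonal (𝕜 := ℂ)) Set.univ (S ∩ {d | Monotone d}) =
      {H | H.IsHermitian} ∩ eigs ⁻¹' S := by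
  ext H
  constructor
  · rintro ⟨U, -, d, ⟨hdS, hd⟩, rfl⟩
    refine ⟨isHermitian_unitaryDiagonal U d, ?_⟩
    rwa [Set.mem_preimage, eigs_unitaryDiagonal U hd]
  · rintro ⟨hH, hS⟩
    obtain ⟨U, hU⟩ := exists_unitaryDiagonal_eigs_eq hH
    exact ⟨U, trivial, eigs H, ⟨hS, eigs_monotone H⟩, hU⟩

lemma isClosed_isHermitian_inter_preimage_eigs {S : Set (Fin n → ℝ)} (hS : IsClosed S) :
    IsClosed ({H : Matrix (Fin n) (Fin n) ℂ | H.IsHermitian} ∩ eigs ⁻¹' S) := by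
  rw [← image2_unitaryDiagonal_monotone]
  exact isClosed_image2_unitaryDiagonal (hS.inter isClosed_monotone)

/-- The Hermitian matrices whose lowest `k` eigenvalues coincide, with no gap required above them;
this is the closure of Σ_k. -/
def degenerateSet (n k : ℕ) : Set (Matrix (Fin n) (Fin n) ℂ) :=
  {H | H.IsHermitian ∧ ∀ i j : Fin n, (i : ℕ) < k → (j : ℕ) < k → eigs H i = eigs H j}

lemma SigmaSet_subset_degenerateSet : SigmaSet n k ⊆ degenerateSet n k :=
  fun _ hH ↦ ⟨hH.1, hH.2.1⟩

lemma degenerateSet_anti : Antitone (degenerateSet n) :=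
  fun _ _ hkl _ hH ↦
    ⟨hH.1, fun i j hi hj ↦ hH.2 i j (hi.trans_le hkl) (hj.trans_le hkl)⟩

lemma isClosed_degenerateSet (n k : ℕ) : IsClosed (degenerateSet n k) := by
  have hS : IsClosed {d : Fin n → ℝ | ∀ i j : Fin n, (i : ℕ) < k → (j : ℕ) < k → d i = d j} := by
    simp only [Set.ofPred_forall]
    exact isClosed_iInter fun i ↦ isClosed_iInter fun j ↦ isClosed_iInter fun _ ↦
      isClosed_iInter fun _ ↦ isClosed_eq (continuous_apply i) (continuous_apply j)
  exact isClosed_isHermitian_inter_preimage_eigs hS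

/-- The tuple `d` with every entry except the first `k` raised by `t`: the perturbation that opens a
gap above the lowest `k` eigenvalues. -/
def openGap (k : ℕ) (d : Fin n → ℝ) (t : ℝ) : Fin n → ℝ :=
  fun i ↦ if (i : ℕ) < k then d i else d i + t

lemma openGap_zero (d : Fin n → ℝ) : openGap k d 0 = d := by
  ext i
  simp [openGap]

lemma continuous_openGap (d : Fin n → ℝ) : Continuous (openGap k d) :=
  continuous_pi fun i ↦ by unfold openGap; split_ifs <;> fun_prop

lemma openGap_monotone {d : Fin n → ℝ} (hd : Monotone d) {t : ℝ} (ht : 0 ≤ t) :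
    Monotone (openGap k d t) := by
  intro i j hij
  have hdij := hd hij
  simp only [openGap]
  split_ifs <;> grind

lemma unitaryDiagonal_openGap_mem_SigmaSet (U : unitaryGroup (Fin n) ℂ) {d : Fin n → ℝ}
    (hd : Monotone d) (hk : ∀ i j : Fin n, (i : ℕ) < k → (j : ℕ) < k → d i = d j) {t : ℝ}
    (ht : 0 < t) : unitaryDiagonal U (openGap k d t) ∈ SigmaSet n k := by
  refine ⟨isHermitian_unitaryDiagonal U _, ?_⟩
  rw [eigs_unitaryDiagonal U (openGap_monotone hd ht.le)]
  refine ⟨fun i j hi hj ↦ by simp [openGap, hi, hj, hk i j hi hj], fun i j hi hj ↦ ?_⟩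
  have hdij : d i ≤ d j := hd (Fin.le_def.mpr (hi.le.trans_eq hj.symm))
  simpa [openGap, hi, hj] using lt_add_of_le_of_pos hdij ht

lemma degenerateSet_subset_closure_SigmaSet : degenerateSet n k ⊆ closure (SigmaSet n k) := by
  rintro H ⟨hH, hk⟩
  obtain ⟨U, hU⟩ := exists_unitaryDiagonal_eigs_eq hH
  have hcont : Continuous fun t ↦ unitaryDiagonal U (openGap k (eigs H) t) :=
    (continuous_unitaryDiagonal U).comp (continuous_openGap (eigs H))
  have hlim : Filter.Tendsto (fun t ↦ unitaryDiagonal U (openGap k (eigs H) t))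
      (nhdsWithin 0 (Set.Ioi 0)) (nhds H) := by
    simpa only [openGap_zero, hU] using (hcont.tendsto 0).mono_left nhdsWithin_le_nhds
  refine mem_closure_of_tendsto hlim ?_
  filter_upwards [self_mem_nhdsWithin] with t ht
  exact unitaryDiagonal_openGap_mem_SigmaSet U (eigs_monotone H) hk ht

lemma closure_SigmaSet_eq_degenerateSet (n k : ℕ) :
    closure (SigmaSet n k) = degenerateSet n k :=
  (closure_minimal SigmaSet_subset_degenerateSet (isClosed_degenerateSet n k)).antisymm
    degenerateSet_subset_closure_SigmaSet

lemma degenerateSet_eq_SigmaSet_union (n k : ℕ) :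
    degenerateSet n k = SigmaSet n k ∪ degenerateSet n (k + 1) := by
  refine Set.Subset.antisymm (fun H ⟨hH, hk⟩ ↦ ?_)
    (Set.union_subset SigmaSet_subset_degenerateSet (degenerateSet_anti k.le_succ))
  by_cases hgap : ∀ i j : Fin n, (i : ℕ) < k → (j : ℕ) = k → eigs H i < eigs H j
  · exact Or.inl ⟨hH, hk, hgap⟩
  · push Not at hgap
    obtain ⟨i, j, hi, hj, hji⟩ := hgap
    have hij : eigs H j = eigs H i :=
      hji.antisymm (eigs_monotone H (Fin.le_def.mpr (hi.le.trans_eq hj.symm)))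
    have heq_i (a : Fin n) (ha : (a : ℕ) < k + 1) : eigs H a = eigs H i := by
      rcases Nat.lt_succ_iff_lt_or_eq.mp ha with ha | ha
      · exact hk a i ha hi
      · rw [Fin.ext (ha.trans hj.symm), hij]
    exact Or.inr ⟨hH, fun a b ha hb ↦ (heq_i a ha).trans (heq_i b hb).symm⟩

lemma degenerateSet_self (n : ℕ) : degenerateSet n n = SigmaSet n n :=
  Set.Subset.antisymm (fun _ hH ↦ ⟨hH.1, hH.2, fun _ j _ hj ↦ absurd hj j.isLt.ne⟩)
    SigmaSet_subset_degenerateSet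

lemma degenerateSet_eq_biUnion_SigmaSet (hk : k ≤ n) :
    degenerateSet n k = ⋃ j ∈ Finset.Icc k n, SigmaSet n j := by
  induction hk using Nat.decreasingInduction with
  | self => simp [degenerateSet_self]
  | of_succ k hk ih =>
    rw [degenerateSet_eq_SigmaSet_union, ih, ← Finset.set_biUnion_insert,
      Finset.insert_Icc_add_one_left_eq_Icc hk.le]

lemma disjoint_SigmaSet_of_lt {j j' : ℕ} (hj : 0 < j) (hjj' : j < j') (hj' : j' ≤ n) :
    Disjoint (SigmaSet n j) (SigmaSet n j') := by
  rw [Set.disjoint_left]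
  rintro H ⟨-, -, hgap⟩ ⟨-, hcoincide, -⟩
  have hjn : j < n := hjj'.trans_le hj'
  exact (hgap ⟨0, hj.trans hjn⟩ ⟨j, hjn⟩ hj rfl).ne
    (hcoincide ⟨0, hj.trans hjn⟩ ⟨j, hjn⟩ (hj.trans hjj') hjj')

end DegenerateSet

/-- **Closure of Σ_k:** the closure of Σ_k equals the set of Hermitian matrices whose lowest k
eigenvalues coincide; equivalently it is the disjoint union Σ_k ∪ Σ_{k+1} ∪ … ∪ Σ_n. -/
theorem closure_SigmaSet {n k : ℕ} (hk2 : 2 ≤ k) (hkn : k < n) :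
    closure (SigmaSet n k)
      = {H : Matrix (Fin n) (Fin n) ℂ | H.IsHermitian ∧
          ∀ i j : Fin n, (i : ℕ) < k → (j : ℕ) < k → eigs H i = eigs H j} ∧
    closure (SigmaSet n k) = (⋃ j ∈ Finset.Icc k n, SigmaSet n j) ∧
    ∀ j j' : ℕ, k ≤ j → j ≤ n → k ≤ j' → j' ≤ n → j ≠ j' →
      Disjoint (SigmaSet n j) (SigmaSet n j') := by
  have hclosure := closure_SigmaSet_eq_degenerateSet n k
  refine ⟨hclosure, hclosure.trans (degenerateSet_eq_biUnion_SigmaSet hkn.le),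
    fun j j' hkj hjn hkj' hj'n hne ↦ ?_⟩
  have hk : 0 < k := two_pos.trans_le hk2
  rcases hne.lt_or_gt with hlt | hgt
  · exact disjoint_SigmaSet_of_lt (hk.trans_le hkj) hlt hj'n
  · exact (disjoint_SigmaSet_of_lt (hk.trans_le hkj') hgt hjn).symm

end
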